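/- Optimality of the deadline-greedy matching on interval bigraphs: Let s_1, …, s_n ∈ ℝ be supply positions with service ranges r_1, …, r_n ≥ 0, and let d_1, …, d_n ∈ ℝ be demand positions; form the bipartite graph G in which supply i is joined to demand j iff |s_i − d_j| ≤ r_i/n. Consider the greedy algorithm that processes the demand nodes in non-decreasing order of position and, whenever the current demand node has at least one currently unmatched neighbor, matches it to an unmatched neighbor i minimizing the deadline s_i + r_i/n (ties broken arbitrarily). Then the matching output by this greedy algorithm is a maximum-cardinality matching of G. -/

import Mathlib

open scoped Classical

noncomputable section

/-- A matching of a bipartite compatibility relation, given as a finite set of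
supply-demand pairs with compatible endpoints and pairwise distinct coordinates. -/
def IsBipMatching {a b : ℕ} (adj : Fin a → Fin b → Prop) (M : Finset (Fin a × Fin b)) : Prop :=
  (∀ e ∈ M, adj e.1 e.2) ∧
    ∀ e ∈ M, ∀ e' ∈ M, e ≠ e' → e.1 ≠ e'.1 ∧ e.2 ≠ e'.2

/-- The maximum cardinality of a matching of the bipartite compatibility relation. -/
def matchingNumber {a b : ℕ} (adj : Fin a → Fin b → Prop) : ℕ :=
  sSup {c | ∃ M : Finset (Fin a × Fin b), IsBipMatching adj M ∧ M.card = c}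

/-!
Call the demand processed at time `t` *saturated* if, for some threshold `b` at or beyond its
position, every demand processed from `t` on with position at most `b` is matched to a supply with
deadline at most `b`. Every neighbor of a supply that stays unmatched is saturated, with the
deadline of that supply as threshold. If a saturated demand is matched to `j`, then every neighbor
of `j` is saturated with the same threshold: `j` was still available, with a deadline at most `b`,
at each earlier demand in its interval. Hence the saturated demands, together with the supplies
matched to unsaturated demands, form a vertex cover consisting of one endpoint of each greedy edge,
and no matching is larger than a vertex cover.
-/

namespace IsBipMatching

variable {a b : ℕ} {adj : Fin a → Fin b → Prop} {M : Finset (Fin a × Fin b)}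

lemma injOn_fst (hM : IsBipMatching adj M) : Set.InjOn Prod.fst (M : Set (Fin a × Fin b)) :=
  fun e he e' he' heq => by_contra fun hne => (hM.2 e he e' he' hne).1 heq

lemma injOn_snd (hM : IsBipMatching adj M) : Set.InjOn Prod.snd (M : Set (Fin a × Fin b)) :=
  fun e he e' he' heq => by_contra fun hne => (hM.2 e he e' he' hne).2 heq

lemma card_le_of_cover (hM : IsBipMatching adj M) {S : Finset (Fin a)} {T : Finset (Fin b)}
    (hcover : ∀ i j, adj i j → i ∈ S ∨ j ∈ T) : M.card ≤ S.card + T.card := by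
  have hfst : (M.filter fun e => e.1 ∈ S).card ≤ S.card :=
    Finset.card_le_card_of_injOn Prod.fst (fun e he => (Finset.mem_filter.1 he).2)
      (hM.injOn_fst.mono (Finset.coe_subset.2 (Finset.filter_subset _ M)))
  have hsnd : (M.filter fun e => e.1 ∉ S).card ≤ T.card :=
    Finset.card_le_card_of_injOn Prod.snd
      (fun e he =>
        have he := Finset.mem_filter.1 he
        (hcover e.1 e.2 (hM.1 e he.1)).resolve_left he.2)
      (hM.injOn_snd.mono (Finset.coe_subset.2 (Finset.filter_subset _ M)))
  rw [← Finset.card_filter_add_card_filter_not (s := M) fun e => e.1 ∈ S]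
  exact add_le_add hfst hsnd

lemma card_eq_matchingNumber_of_cover (hM : IsBipMatching adj M) {S : Finset (Fin a)}
    {T : Finset (Fin b)} (hcover : ∀ i j, adj i j → i ∈ S ∨ j ∈ T)
    (hcard : S.card + T.card ≤ M.card) : M.card = matchingNumber adj := by
  symm
  refine IsGreatest.csSup_eq ⟨⟨M, hM, rfl⟩, ?_⟩
  rintro _ ⟨N, hN, rfl⟩
  exact (hN.card_le_of_cover hcover).trans hcard

lemma card_eq_matchingNumber_of_split (hM : IsBipMatching adj M) (Z : Set (Fin b))
    (hsplit : ∀ i j, adj i j → (∃ j' ∉ Z, (i, j') ∈ M) ∨ j ∈ Z ∧ ∃ i', (i', j) ∈ M) :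
    M.card = matchingNumber adj := by
  -- The cover takes from each edge of `M` its demand if that lies in `Z`, and its supply otherwise.
  refine hM.card_eq_matchingNumber_of_cover
    (S := (M.filter fun e => e.2 ∉ Z).image Prod.fst)
    (T := (M.filter fun e => e.2 ∈ Z).image Prod.snd) (fun i j hij => ?_) ?_
  · rcases hsplit i j hij with ⟨j', hj', hmem⟩ | ⟨hj, i', hmem⟩
    · exact .inl (Finset.mem_image.2 ⟨(i, j'), Finset.mem_filter.2 ⟨hmem, hj'⟩, rfl⟩)
    · exact .inr (Finset.mem_image.2 ⟨(i', j), Finset.mem_filter.2 ⟨hmem, hj⟩, rfl⟩)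
  · rw [← Finset.card_filter_add_card_filter_not (s := M) fun e => e.2 ∈ Z, add_comm]
    exact add_le_add Finset.card_image_le Finset.card_image_le

end IsBipMatching

section Greedy

variable {ι τ P : Type*}

/-- Supply `i` has not been matched before time `t` in the run `m`, where `m t` is the supply
matched to the demand processed at time `t`. -/
def IsAvailable [LT τ] (m : τ → Option ι) (i : ι) (t : τ) : Prop :=
  ∀ t', t' < t → m t' ≠ some i

/-- `m` is a run of the deadline-greedy algorithm: each demand having an available neighbor is
matched to one of least deadline. Demands are identified with the times at which they are
processed. -/
def IsDeadlineGreedy [LT τ] [LE P] (adj : ι → τ → Prop) (deadline : ι → P)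
    (m : τ → Option ι) : Prop :=
  ∀ t, (m t = none → ¬ ∃ i, IsAvailable m i t ∧ adj i t) ∧
    ∀ i, m t = some i → (IsAvailable m i t ∧ adj i t) ∧
      ∀ i', IsAvailable m i' t ∧ adj i' t → deadline i ≤ deadline i'

/-- The demand processed at time `t` is saturated: for some threshold `b` at or beyond its position,
all demands processed from time `t` on at positions up to `b` are matched to supplies of deadline at
most `b`. -/
def IsSaturated [LE τ] [LE P] (pos : τ → P) (deadline : ι → P) (m : τ → Option ι) (t : τ) : Prop :=
  ∃ b, pos t ≤ b ∧ ∀ t', t ≤ t' → pos t' ≤ b → ∃ i, m t' = some i ∧ deadline i ≤ b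

lemma IsAvailable.mono [Preorder τ] {m : τ → Option ι} {i : ι} {t t' : τ}
    (hi : IsAvailable m i t') (htt' : t ≤ t') : IsAvailable m i t :=
  fun u hu => hi u (hu.trans_le htt')

lemma IsSaturated.exists_eq_some [Preorder τ] [LE P] {pos : τ → P} {deadline : ι → P}
    {m : τ → Option ι} {t : τ} (ht : IsSaturated pos deadline m t) : ∃ i, m t = some i := by
  obtain ⟨b, hb, hserved⟩ := ht
  obtain ⟨i, hi, -⟩ := hserved t le_rfl hb
  exact ⟨i, hi⟩

namespace IsDeadlineGreedy

section

variable [LT τ] [LE P] {adj : ι → τ → Prop} {deadline : ι → P} {m : τ → Option ι} {i : ι} {t : τ}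

lemma isAvailable (hm : IsDeadlineGreedy adj deadline m) (hi : m t = some i) :
    IsAvailable m i t :=
  ((hm t).2 i hi).1.1

lemma adj_of_eq_some (hm : IsDeadlineGreedy adj deadline m) (hi : m t = some i) : adj i t :=
  ((hm t).2 i hi).1.2

lemma exists_deadline_le (hm : IsDeadlineGreedy adj deadline m) (hi : IsAvailable m i t)
    (hadj : adj i t) : ∃ j, m t = some j ∧ deadline j ≤ deadline i := by
  cases hmt : m t with
  | none => exact absurd ⟨i, hi, hadj⟩ ((hm t).1 hmt)
  | some j => exact ⟨j, rfl, ((hm t).2 j hmt).2 i ⟨hi, hadj⟩⟩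

end

lemma eq_of_eq_some [LinearOrder τ] [LE P] {adj : ι → τ → Prop} {deadline : ι → P}
    {m : τ → Option ι} (hm : IsDeadlineGreedy adj deadline m) {i : ι} {t t' : τ}
    (ht : m t = some i) (ht' : m t' = some i) : t = t' := by
  rcases lt_trichotomy t t' with hlt | heq | hgt
  · exact absurd ht (hm.isAvailable ht' t hlt)
  · exact heq
  · exact absurd ht' (hm.isAvailable ht t' hgt)

section Interval

variable [Preorder P] {release deadline : ι → P} {pos : τ → P} {m : τ → Option ι} {i : ι} {t : τ}

lemma isSaturated_of_forall_ne_some [Preorder τ]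
    (hm : IsDeadlineGreedy (fun i t => pos t ∈ Set.Icc (release i) (deadline i)) deadline m)
    (hpos : Monotone pos) (hi : ∀ t, m t ≠ some i)
    (ht : pos t ∈ Set.Icc (release i) (deadline i)) : IsSaturated pos deadline m t :=
  ⟨deadline i, ht.2, fun _ htt' ht' =>
    hm.exists_deadline_le (fun u _ => hi u) ⟨ht.1.trans (hpos htt'), ht'⟩⟩

lemma isSaturated_of_eq_some [LinearOrder τ]
    (hm : IsDeadlineGreedy (fun i t => pos t ∈ Set.Icc (release i) (deadline i)) deadline m)
    (hpos : Monotone pos) {u : τ} (hu : IsSaturated pos deadline m u) (hi : m u = some i)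
    (ht : pos t ∈ Set.Icc (release i) (deadline i)) : IsSaturated pos deadline m t := by
  obtain ⟨b, hub, hserved⟩ := hu
  have hib : deadline i ≤ b := by
    obtain ⟨j, hj, hjb⟩ := hserved u le_rfl hub
    rwa [Option.some.inj (hi.symm.trans hj)]
  refine ⟨b, ht.2.trans hib, fun t' htt' ht'b => ?_⟩
  rcases le_or_gt u t' with hut' | ht'u
  · exact hserved t' hut' ht'b
  · have hadj : pos t' ∈ Set.Icc (release i) (deadline i) :=
      ⟨ht.1.trans (hpos htt'), (hpos ht'u.le).trans (hm.adj_of_eq_some hi).2⟩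
    obtain ⟨j, hj, hji⟩ := hm.exists_deadline_le ((hm.isAvailable hi).mono ht'u.le) hadj
    exact ⟨j, hj, hji.trans hib⟩

end Interval

end IsDeadlineGreedy

end Greedy

section Edges

variable {a b : ℕ} {τ P : Type*} [Fintype τ]

/-- The edges selected by the run `m` when the demand processed at time `t` is `ord t`. -/
def runEdges (ord : τ ≃ Fin b) (m : τ → Option (Fin a)) : Finset (Fin a × Fin b) :=
  Finset.univ.biUnion fun t => (m t).elim ∅ fun i => {(i, ord t)}

lemma mem_runEdges {ord : τ ≃ Fin b} {m : τ → Option (Fin a)} {i : Fin a} {j : Fin b} :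
    (i, j) ∈ runEdges ord m ↔ ∃ t, m t = some i ∧ ord t = j := by
  simp only [runEdges, Finset.mem_biUnion, Finset.mem_univ, true_and]
  refine exists_congr fun t => ?_
  cases m t <;> simp [eq_comm]

lemma IsDeadlineGreedy.isBipMatching_runEdges [LinearOrder τ] [LE P]
    {adj : Fin a → Fin b → Prop} {deadline : Fin a → P} {ord : τ ≃ Fin b}
    {m : τ → Option (Fin a)} (hm : IsDeadlineGreedy (fun i t => adj i (ord t)) deadline m) :
    IsBipMatching adj (runEdges ord m) := by
  constructor
  · rintro ⟨i, j⟩ hij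
    obtain ⟨t, hi, rfl⟩ := mem_runEdges.1 hij
    exact hm.adj_of_eq_some hi
  · rintro ⟨i, j⟩ hij ⟨i', j'⟩ hij' hne
    obtain ⟨t, hi, rfl⟩ := mem_runEdges.1 hij
    obtain ⟨t', hi', rfl⟩ := mem_runEdges.1 hij'
    refine ⟨?_, fun hord => ?_⟩
    · rintro rfl
      exact hne (by rw [hm.eq_of_eq_some hi hi'])
    · obtain rfl : t = t' := ord.injective hord
      exact hne (by rw [Option.some.inj (hi.symm.trans hi')])

theorem deadline_greedy_optimal_general [LinearOrder τ] [Preorder P]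
    {release deadline : Fin a → P} {pos : Fin b → P} {ord : τ ≃ Fin b}
    {m : τ → Option (Fin a)} (hord : Monotone fun t => pos (ord t))
    (hm : IsDeadlineGreedy (fun i t => pos (ord t) ∈ Set.Icc (release i) (deadline i)) deadline m) :
    IsBipMatching (fun i j => pos j ∈ Set.Icc (release i) (deadline i)) (runEdges ord m) ∧
      (runEdges ord m).card =
        matchingNumber fun i j => pos j ∈ Set.Icc (release i) (deadline i) := by
  have hM : IsBipMatching (fun i j => pos j ∈ Set.Icc (release i) (deadline i)) (runEdges ord m) :=
    hm.isBipMatching_runEdges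
  let saturated : Set (Fin b) :=
    {j | IsSaturated (fun t => pos (ord t)) deadline m (ord.symm j)}
  have mem_saturated (t : τ) :
      ord t ∈ saturated ↔ IsSaturated (fun t => pos (ord t)) deadline m t := by
    simp [saturated]
  refine ⟨hM, hM.card_eq_matchingNumber_of_split saturated fun i j hij => ?_⟩
  obtain ⟨t, rfl⟩ := ord.surjective j
  by_cases ht : ord t ∈ saturated
  · obtain ⟨i', hi'⟩ := ((mem_saturated t).1 ht).exists_eq_some
    exact .inr ⟨ht, i', mem_runEdges.2 ⟨t, hi', rfl⟩⟩
  · obtain ⟨u, hu⟩ : ∃ u, m u = some i := by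
      by_contra! hi
      exact ht ((mem_saturated t).2 (hm.isSaturated_of_forall_ne_some hord hi hij))
    have hunsat : ord u ∉ saturated := fun hsat =>
      ht ((mem_saturated t).2
        (hm.isSaturated_of_eq_some hord ((mem_saturated u).1 hsat) hu hij))
    exact .inl ⟨ord u, hunsat, mem_runEdges.2 ⟨u, hu, rfl⟩⟩

end Edges

/-- **Optimality of the deadline-greedy matching on interval bigraphs.**
Supply positions `s` with ranges `r ≥ 0` and demand positions `d` on the line; supply
`i` is joined to demand `j` iff `|s i - d j| ≤ r i / n`.  The demand nodes are
processed in any non-decreasing order of position (`ord` with `d ∘ ord` monotone);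
`matched t` records the supply node matched to the `t`-th processed demand (or `none`).
The greedy rule: if the current demand has an unmatched neighbor, it is matched to an
unmatched neighbor minimizing the deadline `s i + r i / n` (ties broken arbitrarily).
Then the resulting set of edges is a maximum-cardinality matching. -/
theorem deadline_greedy_optimal (n : ℕ) (s r d : Fin n → ℝ) (hr : ∀ i, 0 ≤ r i)
    (ord : Equiv.Perm (Fin n))
    (hord : Monotone fun t => d (ord t))
    (matched : Fin n → Option (Fin n))
    (hstep : ∀ t : Fin n,
      (matched t = none →
        ¬ ∃ i : Fin n, (∀ t' : Fin n, t' < t → matched t' ≠ some i) ∧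
          |s i - d (ord t)| ≤ r i / n) ∧
      (∀ i : Fin n, matched t = some i →
        ((∀ t' : Fin n, t' < t → matched t' ≠ some i) ∧ |s i - d (ord t)| ≤ r i / n) ∧
          ∀ i' : Fin n,
            ((∀ t' : Fin n, t' < t → matched t' ≠ some i') ∧
              |s i' - d (ord t)| ≤ r i' / n) →
            s i + r i / n ≤ s i' + r i' / n))
    (Mg : Finset (Fin n × Fin n))
    (hMg : Mg = Finset.univ.biUnion fun t : Fin n =>
      (matched t).elim ∅ fun i => {(i, ord t)}) :
    IsBipMatching (fun i j => |s i - d j| ≤ r i / n) Mg ∧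
      Mg.card = matchingNumber (fun i j => |s i - d j| ≤ r i / n) := by
  simp only [Set.mem_Icc_iff_abs_le] at hstep ⊢
  exact hMg ▸ deadline_greedy_optimal_general hord hstep

end
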